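/- Moment-generating-function bound for the IX reward estimate: for any γ > 0, any policy π, and any t, E[exp(2γ·r̃_t(π))] ≤ exp(2γ·v(π)), where r̃_t(π) = π(A_t|X_t)R_t/(μ(A_t|X_t)+γ). Consequently, by independence of the observations, E[exp(2γ·Σ_{t=1}^n (r̃_t(π) − v(π)))] ≤ 1. -/

import Mathlib

/-!
The bound rests on the elementary inequality `2 z / (1 + z) ≤ log (1 + 2 z)` for `z ≥ 0`. With
`z = γ q / m`, where `m = μ(a|x)` and `q = π(a|x) ρ ∈ [0, 1]`, it gives
`m * exp (2 γ q / (m + γ)) ≤ m + 2 γ q` (`ix_pointwise`); the smoothing `γ ≥ γ q` in the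
denominator is what makes this work. Integrating over the reward, summing over the actions and
integrating over the context turns the right-hand side into `1 + 2 γ v(π) ≤ exp (2 γ v(π))`.
The second claim follows because the expectation over the product measure factorizes into `n`
copies of the first one.

The computation is carried out with lower Lebesgue integrals, where `obsLaw` disintegrates without
integrability side conditions (`lintegral_obsLaw`).
-/

open MeasureTheory ProbabilityTheory

/-- A stochastic contextual bandit instance: context distribution `ν`, behavior policy `μb`,
reward kernel `rker` supported on `[0,1]`, and mean reward function `r`. -/
structure CBSetup (𝓧 𝓐 : Type*) [MeasurableSpace 𝓧] [Fintype 𝓐] [MeasurableSpace 𝓐] where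
  /-- the context distribution -/
  ν : Measure 𝓧
  ν_prob : IsProbabilityMeasure ν
  /-- the behavior policy `μ(a|x)` -/
  μb : 𝓧 → 𝓐 → ℝ
  μb_nonneg : ∀ x a, 0 ≤ μb x a
  μb_sum_one : ∀ x, ∑ a, μb x a = 1
  μb_meas : ∀ a, Measurable fun x => μb x a
  /-- the reward kernel `p(·|x,a)` -/
  rker : 𝓧 → 𝓐 → Measure ℝ
  rker_prob : ∀ x a, IsProbabilityMeasure (rker x a)
  rker_supp : ∀ x a, rker x a (Set.Icc (0:ℝ) 1)ᶜ = 0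
  rker_meas : ∀ a, Measurable fun x => rker x a
  /-- the mean reward `r(x,a)` -/
  r : 𝓧 → 𝓐 → ℝ
  r_def : ∀ x a, r x a = ∫ ρ, ρ ∂(rker x a)
  r_meas : ∀ a, Measurable fun x => r x a

variable {𝓧 𝓐 : Type*} [MeasurableSpace 𝓧] [Fintype 𝓐] [MeasurableSpace 𝓐]
  [MeasurableSingletonClass 𝓐]

/-- The law of a single observation `(X, A, R)` with `X ~ ν`, `A ~ μ(·|X)`, `R ~ p(·|X,A)`. -/
noncomputable def obsLaw (S : CBSetup 𝓧 𝓐) : Measure (𝓧 × 𝓐 × ℝ) :=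
  S.ν.bind fun x => Measure.sum fun a =>
    ENNReal.ofReal (S.μb x a) • (S.rker x a).map fun ρ => (x, a, ρ)

/-- The law of the i.i.d. dataset `(X_t, A_t, R_t)_{t=1}^n`. -/
noncomputable def dataLaw (S : CBSetup 𝓧 𝓐) (n : ℕ) : Measure (Fin n → 𝓧 × 𝓐 × ℝ) :=
  Measure.pi fun _ : Fin n => obsLaw S

/-- A (stochastic, measurable) policy: a map from contexts to distributions over actions. -/
def IsPolicy (π : 𝓧 → 𝓐 → ℝ) : Prop :=
  (∀ x a, 0 ≤ π x a) ∧ (∀ x, ∑ a, π x a = 1) ∧ (∀ a, Measurable fun x => π x a)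

/-- The value `v(π) = E[Σ_a π(a|X) r(X,a)]` of a policy. -/
noncomputable def pval (S : CBSetup 𝓧 𝓐) (π : 𝓧 → 𝓐 → ℝ) : ℝ :=
  ∫ x, ∑ a, π x a * S.r x a ∂S.ν

/-- The smoothed coverage ratio `C_γ(π) = E[Σ_a π(a|X) r(X,a)/(μ(a|X)+γ)]`. -/
noncomputable def covγ (S : CBSetup 𝓧 𝓐) (γ : ℝ) (π : 𝓧 → 𝓐 → ℝ) : ℝ :=
  ∫ x, ∑ a, π x a * S.r x a / (S.μb x a + γ) ∂S.ν

/-- The IX reward estimate `r̃(π) = π(A|X) R / (μ(A|X) + γ)` for one observation `ω = (X,A,R)`. -/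
noncomputable def ixTerm (S : CBSetup 𝓧 𝓐) (γ : ℝ) (π : 𝓧 → 𝓐 → ℝ) (ω : 𝓧 × 𝓐 × ℝ) : ℝ :=
  π ω.1 ω.2.1 * ω.2.2 / (S.μb ω.1 ω.2.1 + γ)

/-- The IX value estimator `ṽ_n(π) = (1/n) Σ_t π(A_t|X_t) R_t / (μ(A_t|X_t) + γ)`. -/
noncomputable def ixEst (S : CBSetup 𝓧 𝓐) (γ : ℝ) {n : ℕ} (π : 𝓧 → 𝓐 → ℝ)
    (D : Fin n → 𝓧 × 𝓐 × ℝ) : ℝ :=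
  (∑ t, ixTerm S γ π (D t)) / n

set_option linter.unusedSectionVars false

/-- The pointwise estimate behind the bound: `m` is the probability of the logged action and `q` the
reward weighted by the target policy. The case `m = 0` is allowed. -/
lemma ix_pointwise {m γ q : ℝ} (hm : 0 ≤ m) (hγ : 0 < γ) (hq : 0 ≤ q) (hq1 : q ≤ 1) :
    m * Real.exp (2 * γ * (q / (m + γ))) ≤ m + 2 * γ * q := by
  rcases hm.eq_or_lt with rfl | hm
  · simp only [zero_mul, zero_add]; positivity
  have h1 : 2 * γ * (q / (m + γ)) ≤ Real.log (1 + 2 * γ * q / m) := by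
    refine le_trans ?_ (Real.le_log_one_add_of_nonneg (by positivity))
    have e : 2 * (2 * γ * q / m) / (2 * γ * q / m + 2) = 2 * γ * (q / (m + γ * q)) := by
      field_simp
      ring
    rw [e]
    gcongr
    nlinarith
  have h2 : Real.exp (2 * γ * (q / (m + γ))) ≤ 1 + 2 * γ * q / m :=
    (Real.le_log_iff_exp_le (by positivity)).1 h1
  calc m * Real.exp (2 * γ * (q / (m + γ))) ≤ m * (1 + 2 * γ * q / m) := by gcongr
    _ = m + 2 * γ * q := by field_simp

lemma measurable_obsKernel (S : CBSetup 𝓧 𝓐) :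
    Measurable fun x => Measure.sum fun a =>
      ENNReal.ofReal (S.μb x a) • (S.rker x a).map fun ρ => (x, a, ρ) := by
  refine Measure.measurable_of_measurable_coe _ fun s hs => ?_
  have h : ∀ a, Measurable fun x =>
      ENNReal.ofReal (S.μb x a) * S.rker x a (Prod.mk x ⁻¹' {p : 𝓧 × ℝ | (p.1, a, p.2) ∈ s}) := by
    intro a
    let κ : Kernel 𝓧 ℝ := ⟨fun x => S.rker x a, S.rker_meas a⟩
    have : IsMarkovKernel κ := ⟨fun x => S.rker_prob x a⟩
    have hs' : MeasurableSet {p : 𝓧 × ℝ | (p.1, a, p.2) ∈ s} :=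
      (by fun_prop : Measurable fun p : 𝓧 × ℝ => (p.1, a, p.2)) hs
    exact (S.μb_meas a).ennreal_ofReal.mul (Kernel.measurable_kernel_prodMk_left (κ := κ) hs')
  convert Finset.measurable_sum Finset.univ fun a _ => h a using 1
  funext x
  rw [Measure.sum_apply _ hs, tsum_fintype]
  refine Finset.sum_congr rfl fun a _ => ?_
  rw [Measure.smul_apply, Measure.map_apply (by fun_prop) hs, smul_eq_mul]
  rfl

/-- Disintegration of `obsLaw`: integrate over the reward, then the action, then the context. -/
lemma lintegral_obsLaw (S : CBSetup 𝓧 𝓐) {f : 𝓧 × 𝓐 × ℝ → ENNReal} (hf : Measurable f) :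
    ∫⁻ ω, f ω ∂(obsLaw S) =
      ∫⁻ x, ∑ a, ENNReal.ofReal (S.μb x a) * ∫⁻ ρ, f (x, a, ρ) ∂(S.rker x a) ∂S.ν := by
  rw [obsLaw, Measure.lintegral_bind (measurable_obsKernel S).aemeasurable hf.aemeasurable]
  refine lintegral_congr fun x => ?_
  rw [lintegral_sum_measure, tsum_fintype]
  refine Finset.sum_congr rfl fun a _ => ?_
  rw [lintegral_smul_measure, lintegral_map hf (by fun_prop), smul_eq_mul]

lemma isProbabilityMeasure_obsLaw (S : CBSetup 𝓧 𝓐) : IsProbabilityMeasure (obsLaw S) := by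
  have := S.ν_prob
  have := S.rker_prob
  constructor
  have h := lintegral_obsLaw S (f := fun _ => 1) measurable_const
  simp only [lintegral_const, measure_univ, mul_one, one_mul] at h
  rw [h, ← lintegral_one.trans (measure_univ (μ := S.ν))]
  refine lintegral_congr fun x => ?_
  rw [← ENNReal.ofReal_sum_of_nonneg fun a _ => S.μb_nonneg x a, S.μb_sum_one,
    ENNReal.ofReal_one]

lemma measurable_ixTerm (S : CBSetup 𝓧 𝓐) (γ : ℝ) {π : 𝓧 → 𝓐 → ℝ} (hπ : IsPolicy π) :
    Measurable (ixTerm S γ π) := by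
  have h : ∀ {g : 𝓧 → 𝓐 → ℝ}, (∀ a, Measurable fun x => g x a) →
      Measurable fun ω : 𝓧 × 𝓐 × ℝ => g ω.1 ω.2.1 := fun {g} hg =>
    (measurable_from_prod_countable_left (f := fun p : 𝓧 × 𝓐 => g p.1 p.2) hg).comp
      (by fun_prop : Measurable fun ω : 𝓧 × 𝓐 × ℝ => (ω.1, ω.2.1))
  exact ((h hπ.2.2).mul measurable_snd.snd).div ((h S.μb_meas).add_const γ)

lemma ae_rker_mem_Icc (S : CBSetup 𝓧 𝓐) (x : 𝓧) (a : 𝓐) :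
    ∀ᵐ ρ ∂(S.rker x a), ρ ∈ Set.Icc (0 : ℝ) 1 := S.rker_supp x a

lemma integrable_rker (S : CBSetup 𝓧 𝓐) (x : 𝓧) (a : 𝓐) :
    Integrable (fun ρ => ρ) (S.rker x a) := by
  have := S.rker_prob x a
  exact Integrable.of_mem_Icc 0 1 aemeasurable_id (ae_rker_mem_Icc S x a)

lemma r_mem_Icc (S : CBSetup 𝓧 𝓐) (x : 𝓧) (a : 𝓐) : S.r x a ∈ Set.Icc (0 : ℝ) 1 := by
  have := S.rker_prob x a
  rw [S.r_def]
  refine ⟨integral_nonneg_of_ae ((ae_rker_mem_Icc S x a).mono fun ρ h => h.1), ?_⟩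
  have := integral_mono_ae (integrable_rker S x a) (integrable_const (1 : ℝ))
    ((ae_rker_mem_Icc S x a).mono fun ρ h => h.2)
  simpa using this

lemma policy_le_one {π : 𝓧 → 𝓐 → ℝ} (hπ : IsPolicy π) (x : 𝓧) (a : 𝓐) : π x a ≤ 1 := by
  rw [← hπ.2.1 x]
  exact Finset.single_le_sum (fun b _ => hπ.1 x b) (Finset.mem_univ a)

/-- The contribution of a single action `a` in context `x`. -/
lemma action_bound (S : CBSetup 𝓧 𝓐) {γ : ℝ} (hγ : 0 < γ) {π : 𝓧 → 𝓐 → ℝ} (hπ : IsPolicy π)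
    (x : 𝓧) (a : 𝓐) :
    ENNReal.ofReal (S.μb x a) *
        ∫⁻ ρ, ENNReal.ofReal (Real.exp (2 * γ * ixTerm S γ π (x, a, ρ))) ∂(S.rker x a) ≤
      ENNReal.ofReal (S.μb x a + 2 * γ * (π x a * S.r x a)) := by
  have := S.rker_prob x a
  have hint : Integrable (fun ρ => S.μb x a + 2 * γ * (π x a * ρ)) (S.rker x a) :=
    (integrable_const _).add (((integrable_rker S x a).const_mul _).const_mul _)
  have hval : ∫ ρ, S.μb x a + 2 * γ * (π x a * ρ) ∂(S.rker x a) =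
      S.μb x a + 2 * γ * (π x a * S.r x a) := by
    rw [integral_add (integrable_const _) (((integrable_rker S x a).const_mul _).const_mul _),
      integral_const_mul, integral_const_mul, S.r_def]
    simp
  have hnn : 0 ≤ᵐ[S.rker x a] fun ρ => S.μb x a + 2 * γ * (π x a * ρ) := by
    filter_upwards [ae_rker_mem_Icc S x a] with ρ hρ
    have := S.μb_nonneg x a
    have := mul_nonneg (hπ.1 x a) hρ.1
    simp only [Pi.zero_apply]
    positivity
  rw [← hval, ofReal_integral_eq_lintegral_ofReal hint hnn,
    ← lintegral_const_mul' _ _ ENNReal.ofReal_ne_top]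
  refine lintegral_mono_ae ?_
  filter_upwards [ae_rker_mem_Icc S x a] with ρ hρ
  rw [← ENNReal.ofReal_mul (S.μb_nonneg x a)]
  exact ENNReal.ofReal_le_ofReal (ix_pointwise (S.μb_nonneg x a) hγ (mul_nonneg (hπ.1 x a) hρ.1)
    (mul_le_one₀ (policy_le_one hπ x a) hρ.1 hρ.2))

lemma lintegral_exp_ixTerm_le (S : CBSetup 𝓧 𝓐) {γ : ℝ} (hγ : 0 < γ) {π : 𝓧 → 𝓐 → ℝ}
    (hπ : IsPolicy π) :
    ∫⁻ ω, ENNReal.ofReal (Real.exp (2 * γ * ixTerm S γ π ω)) ∂(obsLaw S) ≤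
      ENNReal.ofReal (1 + 2 * γ * pval S π) := by
  have := S.ν_prob
  have hterm : ∀ x a, 0 ≤ π x a * S.r x a := fun x a =>
    mul_nonneg (hπ.1 x a) (r_mem_Icc S x a).1
  have hsum : ∀ x, ∑ a, π x a * S.r x a ∈ Set.Icc (0 : ℝ) 1 := fun x => by
    refine ⟨Finset.sum_nonneg fun a _ => hterm x a, ?_⟩
    rw [← hπ.2.1 x]
    exact Finset.sum_le_sum fun a _ => mul_le_of_le_one_right (hπ.1 x a) (r_mem_Icc S x a).2
  have hint : Integrable (fun x => ∑ a, π x a * S.r x a) S.ν :=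
    Integrable.of_mem_Icc 0 1
      (Finset.measurable_sum _ fun a _ => (hπ.2.2 a).mul (S.r_meas a)).aemeasurable
      (ae_of_all _ hsum)
  have hint' : Integrable (fun x => 1 + 2 * γ * ∑ a, π x a * S.r x a) S.ν :=
    (integrable_const _).add (hint.const_mul _)
  have hval : ∫ x, 1 + 2 * γ * ∑ a, π x a * S.r x a ∂S.ν = 1 + 2 * γ * pval S π := by
    rw [integral_add (integrable_const _) (hint.const_mul _), integral_const_mul, pval]
    simp
  rw [lintegral_obsLaw S
    (measurable_ixTerm S γ hπ |>.const_mul (2 * γ) |>.exp |>.ennreal_ofReal), ← hval,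
    ofReal_integral_eq_lintegral_ofReal hint'
      (ae_of_all _ fun x => by have := (hsum x).1; simp only [Pi.zero_apply]; positivity)]
  refine lintegral_mono fun x => ?_
  refine (Finset.sum_le_sum fun a _ => action_bound S hγ hπ x a).trans ?_
  rw [← ENNReal.ofReal_sum_of_nonneg fun a _ => add_nonneg (S.μb_nonneg x a)
    (mul_nonneg (by positivity) (hterm x a)), Finset.sum_add_distrib, S.μb_sum_one,
    Finset.mul_sum]

lemma integral_exp_ixTerm_le (S : CBSetup 𝓧 𝓐) {γ : ℝ} (hγ : 0 < γ) {π : 𝓧 → 𝓐 → ℝ}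
    (hπ : IsPolicy π) :
    ∫ ω, Real.exp (2 * γ * ixTerm S γ π ω) ∂(obsLaw S) ≤ Real.exp (2 * γ * pval S π) := by
  rw [integral_eq_lintegral_of_nonneg_ae (ae_of_all _ fun ω => (Real.exp_pos _).le)
    (measurable_ixTerm S γ hπ |>.const_mul (2 * γ) |>.exp).aestronglyMeasurable]
  refine ENNReal.toReal_le_of_le_ofReal (Real.exp_pos _).le
    ((lintegral_exp_ixTerm_le S hγ hπ).trans (ENNReal.ofReal_le_ofReal ?_))
  rw [add_comm]
  exact Real.add_one_le_exp _

/-- moment-generating-function bound for the IX reward estimate: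
`E[exp(2γ r̃(π))] ≤ exp(2γ v(π))`, and consequently, by independence of the observations,
`E[exp(2γ Σ_t (r̃_t(π) − v(π)))] ≤ 1`. -/
theorem ix_mgf_bound
    (S : CBSetup 𝓧 𝓐) (γ : ℝ) (hγ : 0 < γ)
    (π : 𝓧 → 𝓐 → ℝ) (hπ : IsPolicy π) (n : ℕ) :
    (∫ ω, Real.exp (2 * γ * ixTerm S γ π ω) ∂(obsLaw S)) ≤ Real.exp (2 * γ * pval S π) ∧
    (∫ D, Real.exp (2 * γ * ∑ t, (ixTerm S γ π (D t) - pval S π)) ∂(dataLaw S n)) ≤ 1 := by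
  have := isProbabilityMeasure_obsLaw S
  have h1 := integral_exp_ixTerm_le S hγ hπ
  refine ⟨h1, ?_⟩
  have hexp : ∀ D : Fin n → 𝓧 × 𝓐 × ℝ,
      Real.exp (2 * γ * ∑ t, (ixTerm S γ π (D t) - pval S π)) =
        ∏ t, Real.exp (2 * γ * ixTerm S γ π (D t)) / Real.exp (2 * γ * pval S π) := fun D => by
    rw [Finset.mul_sum, Real.exp_sum]
    exact Finset.prod_congr rfl fun t _ => by rw [mul_sub, Real.exp_sub]
  simp_rw [hexp]
  rw [dataLaw, integral_fintype_prod_eq_pow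
    (fun ω => Real.exp (2 * γ * ixTerm S γ π ω) / Real.exp (2 * γ * pval S π))]
  refine pow_le_one₀ (integral_nonneg fun ω => by positivity) ?_
  rw [integral_div]
  exact (div_le_one (Real.exp_pos _)).2 h1
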